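/- arXiv:2204.08998 — 3 statements merged into one kernel-verified Lean document; each statement's English description precedes it below -/
import Mathlib

section
/- Let L be an S×S real symmetric positive semidefinite matrix whose kernel (the null space of the linear map x ↦ Lx) is one-dimensional and spanned by a unit vector u₁, and let 0 = λ₁ < λ₂ ≤ ... ≤ λ_S be its eigenvalues in increasing order. Let W = I − u₁u₁ᵀ, let γ > 0, and let K be an integer with 1 ≤ K ≤ S−1. Then (1/(2γ))·Σ_{i=2}^{K+1} 1/λ_i is the minimum (least element, attained) of the set of values (trace(Z) + K·s)/(2γ) over all real s and all S×S real symmetric positive semidefinite matrices Z such that the 2S×2S block matrix [[Z + s·I, W], [W, L]] is positive semidefinite. -/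
open Matrix Finset

lemma aux_block_psd {n : Type*} [Fintype n] [DecidableEq n] (a w l : n → ℝ)
    (h : ∀ j x y, 0 ≤ a j * x ^ 2 + 2 * w j * x * y + l j * y ^ 2) :
    (Matrix.fromBlocks (diagonal a) (diagonal w) (diagonal w) (diagonal l)).PosSemidef := by
  refine Matrix.PosSemidef.of_dotProduct_mulVec_nonneg ?_ ?_
  · rw [Matrix.IsHermitian, Matrix.fromBlocks_conjTranspose]
    simp
  · intro x
    have : star x ⬝ᵥ (Matrix.fromBlocks (diagonal a) (diagonal w) (diagonal w) (diagonal l)) *ᵥ x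
        = ∑ j, (a j * x (Sum.inl j) ^ 2 + 2 * w j * x (Sum.inl j) * x (Sum.inr j)
          + l j * x (Sum.inr j) ^ 2) := by
      simp only [Matrix.fromBlocks_mulVec, dotProduct, Fintype.sum_sum_type, Sum.elim_inl,
        Sum.elim_inr, Pi.add_apply, Matrix.mulVec_diagonal, Pi.star_apply, star_trivial,
        Function.comp]
      rw [← Finset.sum_add_distrib]
      refine Finset.sum_congr rfl fun j _ => ?_
      ring
    rw [this]
    exact Finset.sum_nonneg fun j _ => h j _ _

/-- Lemma 1 of the paper: for a PSD Laplacian-like matrix `L` with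
one-dimensional kernel spanned by the unit vector `u₁` and eigenvalues
`0 = λ₁ < λ₂ ≤ … ≤ λ_S`, the quantity `(1/(2γ)) ∑_{i=2}^{K+1} 1/λ_i` is the
least value of `(trace Z + K s)/(2γ)` over all `s` and PSD `Z` such that the
block matrix `[[Z + s I, W], [W, L]]` with `W = I − u₁u₁ᵀ` is PSD. -/
theorem stability_metric_sdp (S K : ℕ) (hK1 : 1 ≤ K) (hKS : K ≤ S - 1)
    (γ : ℝ) (hγ : 0 < γ)
    (L : Matrix (Fin S) (Fin S) ℝ) (hL : L.PosSemidef)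
    (u₁ : Fin S → ℝ) (hu : ∑ i, u₁ i ^ 2 = 1)
    (hker₁ : L.mulVec u₁ = 0)
    (hker : ∀ x, L.mulVec x = 0 → ∃ c : ℝ, x = c • u₁)
    (lam : Fin S → ℝ) (hmono : Monotone lam)
    (hlam0 : lam ⟨0, by omega⟩ = 0) (hlam1 : 0 < lam ⟨1, by omega⟩)
    (U : Matrix (Fin S) (Fin S) ℝ) (hU : U * Uᵀ = 1)
    (hdec : L = U * Matrix.diagonal lam * Uᵀ) :
    IsLeast {v : ℝ | ∃ (s : ℝ) (Z : Matrix (Fin S) (Fin S) ℝ),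
        Z.PosSemidef ∧
        (Matrix.fromBlocks (Z + s • (1 : Matrix (Fin S) (Fin S) ℝ))
          (1 - Matrix.vecMulVec u₁ u₁) (1 - Matrix.vecMulVec u₁ u₁) L).PosSemidef ∧
        v = (Z.trace + K * s) / (2 * γ)}
      ((1 / (2 * γ)) *
        ∑ i ∈ univ.filter (fun i : Fin S => 1 ≤ (i : ℕ) ∧ (i : ℕ) ≤ K), (lam i)⁻¹) := by
  have h0S : 0 < S := by omega
  have hU' : Uᵀ * U = 1 := mul_eq_one_comm.mp hU
  set z : Fin S := ⟨0, by omega⟩ with hz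
  have hpos : ∀ j : Fin S, j ≠ z → 0 < lam j := by
    intro j hj
    refine lt_of_lt_of_le hlam1 (hmono ?_)
    rw [Fin.le_def]
    have : (j : ℕ) ≠ 0 := fun h => hj (Fin.ext h)
    show 1 ≤ (j : ℕ)
    omega
  set w : Fin S → ℝ := fun j => if j = z then 0 else 1 with hw
  have hW : (1 - Matrix.vecMulVec u₁ u₁) = U * diagonal w * Uᵀ := by
    have hLc : L *ᵥ (U *ᵥ Pi.single z 1) = 0 := by
      rw [hdec, Matrix.mulVec_mulVec, Matrix.mul_assoc, hU', Matrix.mul_one,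
        ← Matrix.mulVec_mulVec, Matrix.diagonal_mulVec_single, hlam0]
      simp
    obtain ⟨c, hc⟩ := hker _ hLc
    have hcol : ∀ i, U i z = c * u₁ i := by
      intro i
      have := congrFun hc i
      simpa using this
    have hn : ∑ i, U i z ^ 2 = 1 := by
      have := congrFun (congrFun hU' z) z
      rw [Matrix.mul_apply] at this
      simpa [sq] using this
    have hc2 : c ^ 2 = 1 := by
      simp only [hcol, mul_pow] at hn
      rw [← Finset.mul_sum, hu, mul_one] at hn
      exact hn
    have hwd : diagonal w = 1 - diagonal (Pi.single z (1 : ℝ)) := by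
      rw [← Matrix.diagonal_one, Matrix.diagonal_sub]
      congr 1
      funext j
      by_cases hj : j = z <;> simp [hw, hj]
    rw [hwd, Matrix.mul_sub, Matrix.sub_mul, Matrix.mul_one, hU]
    congr 1
    ext i j
    rw [Matrix.mul_apply]
    simp only [Matrix.mul_diagonal, Matrix.vecMulVec_apply, Matrix.transpose_apply]
    rw [Finset.sum_eq_single z]
    · simp only [Pi.single_eq_same, mul_one, hcol]
      linear_combination (-(u₁ i * u₁ j)) * hc2
    · intro b _ hb
      simp [hb]
    · simp
  set F := univ.filter (fun i : Fin S => 1 ≤ (i : ℕ) ∧ (i : ℕ) ≤ K) with hF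
  have hFz : ∀ j ∈ F, j ≠ z := by
    intro j hj h
    rw [hF, Finset.mem_filter] at hj
    rw [h] at hj
    simp [hz] at hj
  have hcard : (F.card : ℝ) = K := by
    have : F.map Fin.valEmbedding = Finset.Icc 1 K := by
      ext a
      simp only [hF, Finset.mem_map, Finset.mem_filter, Finset.mem_univ, true_and,
        Fin.valEmbedding_apply, Finset.mem_Icc]
      constructor
      · rintro ⟨i, hi, rfl⟩
        exact hi
      · intro h
        exact ⟨⟨a, by omega⟩, h, rfl⟩
    have h2 := congrArg Finset.card this
    rw [Finset.card_map, Nat.card_Icc] at h2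
    rw [h2]
    simp
  have hconj : ∀ s : ℝ, ∀ Z' : Matrix (Fin S) (Fin S) ℝ,
      Matrix.fromBlocks (U * Z' * Uᵀ + s • (1 : Matrix (Fin S) (Fin S) ℝ))
        (1 - Matrix.vecMulVec u₁ u₁) (1 - Matrix.vecMulVec u₁ u₁) L
      = Matrix.fromBlocks U 0 0 U * Matrix.fromBlocks (Z' + s • 1) (diagonal w) (diagonal w)
        (diagonal lam) * (Matrix.fromBlocks U 0 0 U)ᴴ := by
    intro s Z'
    rw [hW, hdec, Matrix.fromBlocks_conjTranspose, Matrix.fromBlocks_multiply,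
      Matrix.fromBlocks_multiply]
    simp [Matrix.mul_add, Matrix.add_mul, hU, Matrix.conjTranspose_eq_transpose_of_trivial]
  constructor
  · set k : Fin S := ⟨K, by omega⟩ with hk
    have hkz : k ≠ z := by
      intro h
      have := congrArg Fin.val h
      simp [hk, hz] at this
      omega
    set s := (lam k)⁻¹ with hs
    have hspos : 0 < s := inv_pos.mpr (hpos k hkz)
    set d : Fin S → ℝ := fun j => if j ∈ F then (lam j)⁻¹ - s else 0 with hd
    have hd0 : ∀ j, 0 ≤ d j := by
      intro j
      simp only [hd]
      split_ifs with hj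
      · have hle : lam j ≤ lam k := by
          apply hmono
          rw [Fin.le_def]
          exact (Finset.mem_filter.mp hj).2.2
        exact sub_nonneg.mpr (inv_anti₀ (hpos j (hFz j hj)) hle)
      · exact le_rfl
    have hds : ∀ j, j ≠ z → (lam j)⁻¹ ≤ d j + s := by
      intro j hjz
      simp only [hd]
      split_ifs with hj
      · linarith
      · have hle : lam k ≤ lam j := by
          apply hmono
          rw [Fin.le_def]
          have h0 : (j : ℕ) ≠ 0 := fun h => hjz (Fin.ext h)
          have : ¬ (1 ≤ (j : ℕ) ∧ (j : ℕ) ≤ K) := fun h => hj (Finset.mem_filter.mpr ⟨Finset.mem_univ _, h⟩)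
          show K ≤ (j : ℕ)
          omega
        rw [zero_add]
        exact inv_anti₀ (hpos k hkz) hle
    refine ⟨s, U * diagonal d * Uᵀ, ?_, ?_, ?_⟩
    · have := (Matrix.PosSemidef.diagonal (d := d) hd0).mul_mul_conjTranspose_same U
      rwa [Matrix.conjTranspose_eq_transpose_of_trivial] at this
    · rw [hconj]
      apply Matrix.PosSemidef.mul_mul_conjTranspose_same
      have : diagonal d + s • (1 : Matrix (Fin S) (Fin S) ℝ) = diagonal (fun j => d j + s) := by
        rw [Matrix.smul_one_eq_diagonal, Matrix.diagonal_add]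
      rw [this]
      apply aux_block_psd
      intro j x y
      by_cases hj : j = z
      · have : 0 ≤ d j + s := add_nonneg (hd0 j) hspos.le
        have hl : lam j = 0 := by rw [hj]; exact hlam0
        simp only [hw, hj, if_true]
        rw [← hj, hl]
        have := mul_nonneg this (sq_nonneg x)
        linarith
      · simp only [hw, hj, if_false]
        have h1 := hds j hj
        have h2 := hpos j hj
        have h3 := mul_le_mul_of_nonneg_right h1 (sq_nonneg x)
        have h4 : (lam j)⁻¹ * x ^ 2 + 2 * 1 * x * y + lam j * y ^ 2
            = (lam j)⁻¹ * (x + lam j * y) ^ 2 := by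
          field_simp
          ring
        have h5 : 0 ≤ (lam j)⁻¹ * (x + lam j * y) ^ 2 := by positivity
        linarith
    · have : (U * diagonal d * Uᵀ).trace = ∑ j ∈ F, (lam j)⁻¹ - K * s := by
        rw [Matrix.trace_mul_comm, ← Matrix.mul_assoc, hU', Matrix.one_mul, Matrix.trace_diagonal]
        simp only [hd]
        rw [← Finset.sum_filter]
        simp [hcard]
      rw [this]
      ring
  · rintro v ⟨s, Z, hZ, hB, rfl⟩
    set Z' := Uᵀ * Z * U with hZ'
    have hZZ : Z = U * Z' * Uᵀ := by
      rw [hZ', Matrix.mul_assoc, Matrix.mul_assoc Uᵀ, Matrix.mul_assoc, Matrix.mul_assoc, hU,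
        Matrix.mul_one, ← Matrix.mul_assoc, hU, Matrix.one_mul]
    have hZp : Z'.PosSemidef := by
      have := hZ.conjTranspose_mul_mul_same U
      rwa [Matrix.conjTranspose_eq_transpose_of_trivial] at this
    have htr : Z.trace = ∑ j, Z' j j := by
      rw [hZZ, Matrix.trace_mul_comm, ← Matrix.mul_assoc, hU', Matrix.one_mul]
      rfl
    have hB' : (Matrix.fromBlocks (Z' + s • 1) (diagonal w) (diagonal w)
        (diagonal lam)).PosSemidef := by
      rw [hZZ, hconj] at hB
      have := hB.conjTranspose_mul_mul_same (Matrix.fromBlocks U 0 0 U)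
      have hV : (Matrix.fromBlocks U 0 0 U)ᴴ * Matrix.fromBlocks U 0 0 U = 1 := by
        rw [Matrix.fromBlocks_conjTranspose, Matrix.fromBlocks_multiply]
        simp [Matrix.conjTranspose_eq_transpose_of_trivial, hU']
      rw [Matrix.mul_assoc, Matrix.mul_assoc _ _ (Matrix.fromBlocks U 0 0 U), hV, Matrix.mul_one,
        ← Matrix.mul_assoc, hV, Matrix.one_mul] at this
      exact this
    have hj : ∀ j ∈ F, (lam j)⁻¹ ≤ Z' j j + s := by
      intro j hj
      have h1 := hB'.dotProduct_mulVec_nonneg (Sum.elim (Pi.single j 1) (Pi.single j (-(lam j)⁻¹)))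
      have hp := hpos j (hFz j hj)
      have hwj : w j = 1 := by simp [hw, hFz j hj]
      have h2 : lam j * (lam j)⁻¹ = 1 := mul_inv_cancel₀ hp.ne'
      simp only [Matrix.fromBlocks_mulVec, dotProduct, Fintype.sum_sum_type, Sum.elim_inl,
        Sum.elim_inr, Pi.add_apply, Matrix.mulVec_diagonal, Pi.star_apply, star_trivial,
        Function.comp, Sum.elim_comp_inl, Sum.elim_comp_inr, Pi.single_apply, ite_mul, zero_mul,
        Finset.sum_ite_eq', Finset.sum_ite_eq, Finset.mem_univ, if_true, hwj] at h1
      simp [Matrix.mulVec, dotProduct, Pi.single_apply, hwj] at h1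
      nlinarith
    have hsum := Finset.sum_le_sum hj
    rw [Finset.sum_add_distrib, Finset.sum_const, nsmul_eq_mul, hcard] at hsum
    have hle : ∑ j ∈ F, Z' j j ≤ ∑ j, Z' j j :=
      Finset.sum_le_sum_of_subset_of_nonneg (Finset.subset_univ _) fun i _ _ => hZp.diag_nonneg
    rw [one_div, inv_mul_eq_div]
    apply div_le_div_of_nonneg_right _ (by positivity)
    rw [htr]
    linarith
end

section
/- Let A be an n×n real symmetric matrix, B an n×m real matrix, C an m×m real symmetric positive semidefinite matrix, and let P be a Moore–Penrose pseudoinverse of C. Then the (n+m)×(n+m) block matrix [[A, B], [Bᵀ, C]] is positive semidefinite if and only if (I − C·P)·Bᵀ = 0 and A − B·P·Bᵀ is positive semidefinite. -/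
open Matrix

/-- Generalized Schur-complement characterization of positive semidefiniteness
of a block matrix `[[A, B], [Bᵀ, C]]` with a possibly singular PSD block `C`,
where `P` is a Moore–Penrose pseudoinverse of `C`. -/
theorem schur_complement_psd_pseudoinverse (n m : ℕ)
    (A : Matrix (Fin n) (Fin n) ℝ) (hA : A.IsSymm)
    (B : Matrix (Fin n) (Fin m) ℝ)
    (C : Matrix (Fin m) (Fin m) ℝ) (hC : C.PosSemidef)
    (P : Matrix (Fin m) (Fin m) ℝ)
    (hP1 : C * P * C = C) (hP2 : P * C * P = P)
    (hP3 : (C * P)ᵀ = C * P) (hP4 : (P * C)ᵀ = P * C) :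
    (Matrix.fromBlocks A B Bᵀ C).PosSemidef ↔
      (1 - C * P) * Bᵀ = 0 ∧ (A - B * P * Bᵀ).PosSemidef := by
  have hCT : Cᵀ = C := by
    have := hC.1
    rwa [Matrix.IsHermitian, Matrix.conjTranspose_eq_transpose_of_trivial] at this
  have h3 : Pᵀ * C = C * P := by rw [← hP3, Matrix.transpose_mul, hCT]
  have h4 : C * Pᵀ = P * C := by rw [← hP4, Matrix.transpose_mul, hCT]
  have h5 : C * Pᵀ * C = C := by
    have := congrArg Matrix.transpose hP1
    simpa [Matrix.transpose_mul, hCT, Matrix.mul_assoc] using this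
  have e1 : C * P = P * C * (C * P) := by
    rw [← h4, ← Matrix.mul_assoc, h5]
  have e2 : P * C = P * C * (C * P) := by
    rw [← h3, ← Matrix.mul_assoc, Matrix.mul_assoc P C Pᵀ, Matrix.mul_assoc P, h5]
  have hcomm : C * P = P * C := e1.trans e2.symm
  have hPT : Pᵀ = P := by
    have : Pᵀ = Pᵀ * C * Pᵀ := by
      have := congrArg Matrix.transpose hP2
      simpa [Matrix.transpose_mul, hCT, Matrix.mul_assoc] using this.symm
    rw [this, h3, hcomm, Matrix.mul_assoc, h4, ← hcomm, ← Matrix.mul_assoc, hP2]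
  have hK : C * (1 - C * P) = 0 := by
    rw [hcomm, Matrix.mul_sub, ← Matrix.mul_assoc, hP1, Matrix.mul_one, sub_self]
  constructor
  · intro hM
    have hB : B * (1 - C * P) = 0 := by
      apply Matrix.ext_of_mulVec_single
      intro i
      set w := (1 - C * P) *ᵥ (Pi.single i 1) with hw
      have hCw : C *ᵥ w = 0 := by
        rw [hw, Matrix.mulVec_mulVec, hK, Matrix.zero_mulVec]
      have hz := (hM.dotProduct_mulVec_zero_iff (Sum.elim 0 w)).1 (by
        simp [Matrix.fromBlocks_mulVec, hCw, Matrix.dotProduct_block])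
      rw [← Matrix.mulVec_mulVec, ← hw, Matrix.zero_mulVec]
      ext j
      have := congrFun hz (Sum.inl j)
      simpa [Matrix.fromBlocks_mulVec] using this
    have hB' : (1 - C * P) * Bᵀ = 0 := by
      have := congrArg Matrix.transpose hB
      rwa [Matrix.transpose_mul, Matrix.transpose_sub, hP3,
        Matrix.transpose_one, Matrix.transpose_zero] at this
    refine ⟨hB', ?_⟩
    have := hM.conjTranspose_mul_mul_same (Matrix.fromRows 1 (-(P * Bᵀ)))
    convert this using 1
    have h6 : C * (P * Bᵀ) = Bᵀ := by
      rw [Matrix.sub_mul, Matrix.one_mul, sub_eq_zero, Matrix.mul_assoc] at hB'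
      exact hB'.symm
    rw [Matrix.conjTranspose_eq_transpose_of_trivial, Matrix.transpose_fromRows,
      Matrix.mul_assoc (Matrix.fromCols _ _), Matrix.fromBlocks_mul_fromRows, Matrix.fromCols_mul_fromRows]
    simp [h6, Matrix.mul_assoc, sub_eq_add_neg]
  · rintro ⟨hB', hS⟩
    have h6 : C * (P * Bᵀ) = Bᵀ := by
      rw [Matrix.sub_mul, Matrix.one_mul, sub_eq_zero, Matrix.mul_assoc] at hB'
      exact hB'.symm
    have h7 : B * (P * C) = B := by
      have := congrArg Matrix.transpose h6
      simpa [Matrix.transpose_mul, hCT, hPT, Matrix.mul_assoc] using this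
    have t1 := hS.conjTranspose_mul_mul_same (Matrix.fromCols (1 : Matrix (Fin n) (Fin n) ℝ) (0 : Matrix (Fin n) (Fin m) ℝ))
    have t2 := hC.conjTranspose_mul_mul_same (Matrix.fromCols (P * Bᵀ) (1 : Matrix (Fin m) (Fin m) ℝ))
    convert t1.add t2 using 1
    simp only [Matrix.conjTranspose_eq_transpose_of_trivial, Matrix.transpose_fromCols,
      Matrix.mul_assoc, Matrix.mul_fromCols, Matrix.fromRows_mul_fromCols]
    simp [h6, h7, hPT, Matrix.mul_assoc, Matrix.fromBlocks_add]
    ext (i | i) (j | j) <;> simp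
end

section
/- Let L be an S×S real symmetric positive semidefinite matrix whose kernel (the null space of the linear map x ↦ Lx) is one-dimensional and spanned by a unit vector u₁, let P be a Moore–Penrose pseudoinverse of L, and set W = I − u₁u₁ᵀ. Then for every S×S real symmetric matrix Z and every real number s, the 2S×2S block matrix [[Z + s·I, W], [W, L]] is positive semidefinite if and only if Z + s·I − P is positive semidefinite. -/
open Matrix

lemma aux_proj {S : ℕ} (L P : Matrix (Fin S) (Fin S) ℝ) (u₁ : Fin S → ℝ)
    (hker₁ : L.mulVec u₁ = 0) (hu : ∑ i, u₁ i ^ 2 = 1)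
    (hker : ∀ x, L.mulVec x = 0 → ∃ c : ℝ, x = c • u₁)
    (hP1 : L * P * L = L) (hP4 : (P * L)ᵀ = P * L) :
    P * L = 1 - Matrix.vecMulVec u₁ u₁ := by
  have hLQ : L * (1 - P * L) = 0 := by
    rw [mul_sub, ← mul_assoc, hP1]; simp
  have hQs : (1 - P * L)ᵀ = 1 - P * L := by
    rw [transpose_sub, hP4, transpose_one]
  have hQu : (1 - P * L) *ᵥ u₁ = u₁ := by
    rw [sub_mulVec, ← mulVec_mulVec, hker₁]; simp
  have hQ : 1 - P * L = vecMulVec u₁ u₁ := by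
    generalize 1 - P * L = Q at *
    have h1 : ∀ j, ∃ c : ℝ, (fun i => Q i j) = c • u₁ := by
      intro j
      apply hker
      ext i
      have := congrFun (congrFun hLQ i) j
      simpa [mul_apply, mulVec, dotProduct] using this
    choose v hv using h1
    have h2 : ∀ i j, Q i j = v j * u₁ i := fun i j => by
      simpa using congrFun (hv j) i
    have h3 : ∀ i, u₁ i = v i := by
      intro i
      have h4 := congrFun hQu i
      rw [← hQs] at h4
      simp only [mulVec, dotProduct, transpose_apply, h2] at h4
      rw [← h4]
      calc _ = v i * ∑ j, u₁ j ^ 2 := by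
            rw [Finset.mul_sum]; exact Finset.sum_congr rfl fun _ _ => by ring
        _ = v i := by rw [hu, mul_one]
    ext i j
    rw [h2, vecMulVec_apply, ← h3, mul_comm]
  rw [← hQ]; simp

/-- The LMI constraint of Lemma 1: with `W = I − u₁u₁ᵀ`, the block matrix
`[[Z + s I, W], [W, L]]` is PSD if and only if `Z + s I − L† ⪰ 0`, where `P = L†`
is the Moore–Penrose pseudoinverse of `L`. -/
theorem block_lmi_iff_psd (S : ℕ)
    (L : Matrix (Fin S) (Fin S) ℝ) (hL : L.PosSemidef)
    (u₁ : Fin S → ℝ) (hu : ∑ i, u₁ i ^ 2 = 1)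
    (hker₁ : L.mulVec u₁ = 0)
    (hker : ∀ x, L.mulVec x = 0 → ∃ c : ℝ, x = c • u₁)
    (P : Matrix (Fin S) (Fin S) ℝ)
    (hP1 : L * P * L = L) (hP2 : P * L * P = P)
    (hP3 : (L * P)ᵀ = L * P) (hP4 : (P * L)ᵀ = P * L) :
    ∀ (Z : Matrix (Fin S) (Fin S) ℝ), Z.IsSymm → ∀ s : ℝ,
      ((Matrix.fromBlocks (Z + s • (1 : Matrix (Fin S) (Fin S) ℝ))
          (1 - Matrix.vecMulVec u₁ u₁) (1 - Matrix.vecMulVec u₁ u₁) L).PosSemidef ↔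
        (Z + s • (1 : Matrix (Fin S) (Fin S) ℝ) - P).PosSemidef) := by
  have hLt : Lᵀ = L := by simpa using hL.isHermitian.eq
  have hW1 := aux_proj L P u₁ hker₁ hu hker hP1 hP4
  have hPtL : Pᵀ * L = L * P := by rw [← hP3, transpose_mul, hLt]
  have hLPt : L * Pᵀ = P * L := by rw [← hP4, transpose_mul, hLt]
  have hW2 := aux_proj L Pᵀ u₁ hker₁ hu hker
    (by simpa [transpose_mul, hLt, mul_assoc] using congrArg transpose hP1)
    (by rw [hPtL, hP3])
  rw [hPtL] at hW2
  have hPt : Pᵀ = P := by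
    calc Pᵀ = (P * (L * P))ᵀ := by rw [← mul_assoc, hP2]
      _ = L * P * Pᵀ := by rw [transpose_mul, hP3]
      _ = P * (L * Pᵀ) := by rw [hW2, ← hW1, mul_assoc]
      _ = P * (L * P) := by rw [hLPt, hW1, hW2]
      _ = P := by rw [← mul_assoc, hP2]
  intro Z hZ s
  generalize Z + s • (1 : Matrix (Fin S) (Fin S) ℝ) = A
  rw [← hW1]
  have hc : L * P = P * L := by rw [hW1, hW2]
  have hP2' : P * P * L = P := by rw [mul_assoc, ← hc, ← mul_assoc, hP2]
  constructor
  · intro h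
    have := h.conjTranspose_mul_mul_same (fromRows 1 (-P))
    convert this using 1
    rw [conjTranspose_fromRows_eq_fromCols_conjTranspose, fromCols_mul_fromBlocks,
      fromCols_mul_fromRows]
    simp [conjTranspose_eq_transpose_of_trivial, hPt, ← mul_assoc, hP2', sub_eq_add_neg]
  · intro h
    have h1 := h.mul_mul_conjTranspose_same (fromRows (1 : Matrix (Fin S) (Fin S) ℝ) (0 : Matrix (Fin S) (Fin S) ℝ))
    have h2 := hL.mul_mul_conjTranspose_same (fromRows P (1 : Matrix (Fin S) (Fin S) ℝ))
    convert h1.add h2 using 1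
    rw [conjTranspose_fromRows_eq_fromCols_conjTranspose,
      conjTranspose_fromRows_eq_fromCols_conjTranspose, fromRows_mul _ _ (A - P), fromRows_mul _ _ L,
      fromRows_mul_fromCols, fromRows_mul_fromCols, fromBlocks_add]
    simp [conjTranspose_eq_transpose_of_trivial, hPt, hP2, hc]
end
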